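/- arXiv:1609.00595 — 2 statements merged into one kernel-verified Lean document; each statement's English description precedes it below -/
import Mathlib

section
/- Let P be a co-rooted finite poset and Q any finite poset, and K a field. Then the ideal J_{P,Q} is generated by squarefree binomials, i.e. J_{P,Q} equals the ideal of T generated by the squarefree binomials it contains. -/
open MvPolynomial

/-- The `K`-algebra map sending the variable `t_φ` (indexed by an isotone map
`φ : P →o Q`) to the monomial `∏_{p ∈ P} x_{p, φ(p)}`. -/
noncomputable def isotonianMap (K P Q : Type) [Field K] [PartialOrder P] [Fintype P]
    [PartialOrder Q] [Fintype Q] :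
    MvPolynomial (P →o Q) K →ₐ[K] MvPolynomial (P × Q) K :=
  aeval fun φ : P →o Q => ∏ p : P, X (p, φ p)

/-- The defining ideal `J_{P,Q}` of the isotonian algebra `K[P,Q]`. -/
noncomputable def isotonianIdeal (K P Q : Type) [Field K] [PartialOrder P] [Fintype P]
    [PartialOrder Q] [Fintype Q] :
    Ideal (MvPolynomial (P →o Q) K) :=
  RingHom.ker (isotonianMap K P Q)

/-- A binomial `monomial u 1 - monomial v 1` which is squarefree: all exponents are at most 1. -/
def IsSquarefreeBinomial {σ K : Type} [Field K] (f : MvPolynomial σ K) : Prop :=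
  ∃ u v : σ →₀ ℕ, (∀ i, u i ≤ 1) ∧ (∀ i, v i ≤ 1) ∧ f = monomial u 1 - monomial v 1

/-!
The kernel of `Φ` is spanned by the binomials `u - v` with `Φ u = Φ v`. A monomial `∏ t_φ` is a
multiset `s` of isotone maps, and its image records precisely, for each `p`, the multiset of values
`φ p` with `φ ∈ s`. So the theorem says that any two multisets `s`, `t` with the same values at
every point are connected by squarefree moves.

To connect them, walk down `P`, making the restrictions of `s` and `t` to an ever larger upper set
coincide. Suppose that they agree on the upper set `U` and that `p` is maximal outside `U`. Follow
`φ ∈ s` to some `ψ ∈ t` with the same value at `p`, and then `ψ` to some `φ' ∈ s` with the same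
restriction to `U`. With fixed choices this is a self-map of the finite set of restrictions to `U`,
so it permutes the nonempty set of its periodic points. Exchanging the parts below `p` of the
chosen `φ ∈ s` along this permutation is a squarefree move, after which these maps agree with
elements of `t` on `U ∪ {p}`. The new maps are isotone because an element above some `x ≤ p` is
comparable with `p`.
-/

namespace Isotonian

open Function

section Cycles

universe u

variable {H B : Type*} {A : Type u}

theorem periodicPts_nonempty [Finite A] [Nonempty A] (f : A → A) : (periodicPts f).Nonempty := by
  obtain ⟨x⟩ := ‹Nonempty A›
  obtain ⟨m, n, hmn, heq⟩ : ∃ m n, m < n ∧ f^[m] x = f^[n] x := by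
    obtain ⟨m, n, hne, heq⟩ := Finite.exists_ne_map_eq_of_infinite fun n => f^[n] x
    rcases hne.lt_or_gt with hlt | hlt
    exacts [⟨m, n, hlt, heq⟩, ⟨n, m, hlt, heq.symm⟩]
  refine ⟨f^[m] x, mk_mem_periodicPts (Nat.sub_pos_of_lt hmn) ?_⟩
  rw [IsPeriodicPt, IsFixedPt, ← iterate_add_apply, Nat.sub_add_cancel hmn.le, heq]

theorem map_univ_le_of_injective [Fintype A] {h : A → H} (hh : Injective h) {s : Multiset H}
    (hs : ∀ i, h i ∈ s) : Finset.univ.val.map h ≤ s := by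
  refine (Multiset.le_iff_subset (Finset.univ.nodup.map hh)).2 fun y hy => ?_
  obtain ⟨i, -, rfl⟩ := Multiset.mem_map.1 hy
  exact hs i

theorem map_univ_comp_perm [Fintype A] (σ : Equiv.Perm A) (h : A → H) :
    (Finset.univ.val.map fun i => h (σ i)) = Finset.univ.val.map h := by
  rw [← comp_def h σ, ← Multiset.map_map, Multiset.map_univ_val_equiv]

theorem exists_cycle (f : H → A) (g : H → B) {s t : Multiset H} (hs : s ≠ 0)
    (hf : s.map f = t.map f) (hg : s.map g = t.map g) :
    ∃ (ι : Type u) (_ : Fintype ι) (_ : Nonempty ι) (σ : Equiv.Perm ι) (h k : ι → H),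
      Injective (f ∘ h) ∧ Finset.univ.val.map h ≤ s ∧ Finset.univ.val.map k ≤ t ∧
        (∀ i, f (k i) = f (h (σ i))) ∧ ∀ i, g (k i) = g (h i) := by
  classical
  let V := {x // x ∈ (s.map f).toFinset}
  have hchoice : ∀ x : V, ∃ h ∈ s, ∃ k ∈ t, f h = x ∧ g k = g h := by
    rintro ⟨x, hx⟩
    obtain ⟨h, hh, rfl⟩ := Multiset.mem_map.1 (Multiset.mem_toFinset.1 hx)
    obtain ⟨k, hk, hgk⟩ := Multiset.mem_map.1 (hg ▸ Multiset.mem_map_of_mem g hh)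
    exact ⟨h, hh, k, hk, rfl, hgk⟩
  choose h hhs k hkt hfh hgk using hchoice
  let next : V → V := fun x =>
    ⟨f (k x), Multiset.mem_toFinset.2 (hf ▸ Multiset.mem_map_of_mem f (hkt x))⟩
  have : Nonempty V := by
    obtain ⟨φ, hφ⟩ := Multiset.exists_mem_of_ne_zero hs
    exact ⟨⟨f φ, Multiset.mem_toFinset.2 (Multiset.mem_map_of_mem f hφ)⟩⟩
  let σ : Equiv.Perm (periodicPts next) := (bijOn_periodicPts next).equiv next
  have hfk : ∀ i : periodicPts next, f (k i) = f (h (σ i)) := fun i => (hfh (σ i)).symm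
  have hinj : Injective (f ∘ fun i : periodicPts next => h i) := fun i j hij =>
    Subtype.ext (Subtype.ext ((hfh i).symm.trans (hij.trans (hfh j))))
  have hinjk : Injective fun i : periodicPts next => k i := fun i j hij =>
    σ.injective (hinj ((hfk i).symm.trans ((congrArg f hij).trans (hfk j))))
  exact ⟨periodicPts next, inferInstance, (periodicPts_nonempty next).to_subtype, σ,
    fun i => h i, fun i => k i, hinj, map_univ_le_of_injective hinj.of_comp fun i => hhs i,
    map_univ_le_of_injective hinjk fun i => hkt i, hfk, fun i => hgk i⟩

end Cycles

section Splice

/-- The order condition of co-rootedness, without the greatest element: all principal upper sets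
are chains. The finite posets satisfying it are the disjoint unions of co-rooted posets. -/
def IsCoforest (P : Type*) [LE P] : Prop :=
  ∀ a b c : P, c ≤ a → c ≤ b → a ≤ b ∨ b ≤ a

variable {P Q : Type*} [Preorder P] [Preorder Q]

open Classical in
/-- The isotone map that coincides with `ψ` on the elements below `p` and with `φ` elsewhere. -/
noncomputable def splice (hP : IsCoforest P) (φ ψ : P →o Q) (p : P)
    (h : ∀ y, p < y → ψ p ≤ φ y) : P →o Q where
  toFun x := if x ≤ p then ψ x else φ x
  monotone' x y hxy := by
    by_cases hy : y ≤ p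
    · simpa only [hxy.trans hy, hy, if_true] using ψ.monotone hxy
    by_cases hx : x ≤ p
    · have hpy : p < y := ((hP p y x hx hxy).resolve_right hy).lt_of_not_ge hy
      simpa only [hx, hy, if_true, if_false] using (ψ.monotone hx).trans (h y hpy)
    · simpa only [hx, hy, if_false] using φ.monotone hxy

variable {hP : IsCoforest P} {φ ψ : P →o Q} {p : P} {h : ∀ y, p < y → ψ p ≤ φ y}

theorem splice_of_le {x : P} (hx : x ≤ p) : splice hP φ ψ p h x = ψ x :=
  if_pos hx

theorem splice_of_not_le {x : P} (hx : ¬x ≤ p) : splice hP φ ψ p h x = φ x :=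
  if_neg hx

end Splice

section Moves

variable {P Q : Type*} [Preorder P] [Preorder Q]

/-- The multiset of values at `p` of a multiset of isotone maps. -/
def marginal (p : P) : Multiset (P →o Q) →+ Multiset Q :=
  Multiset.mapAddMonoidHom fun φ => φ p

/-- The multiset of restrictions to `U` of a multiset of isotone maps. -/
def jointMarginal (U : Set P) : Multiset (P →o Q) →+ Multiset (U → Q) :=
  Multiset.mapAddMonoidHom fun φ x => φ x

theorem marginal_apply (p : P) (s : Multiset (P →o Q)) : marginal p s = s.map fun φ => φ p :=
  rfl

theorem jointMarginal_apply (U : Set P) (s : Multiset (P →o Q)) :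
    jointMarginal U s = s.map fun φ (x : U) => φ x :=
  rfl

theorem marginal_eq_of_jointMarginal_eq {U : Set P} {p : P} (hp : p ∈ U)
    {s t : Multiset (P →o Q)} (h : jointMarginal U s = jointMarginal U t) :
    marginal p s = marginal p t := by
  have hres (r : Multiset (P →o Q)) :
      marginal p r = (jointMarginal U r).map fun f => f ⟨p, hp⟩ := by
    rw [jointMarginal_apply, Multiset.map_map]
    rfl
  rw [hres, hres, h]

theorem card_eq_of_marginal_eq {p : P} {s t : Multiset (P →o Q)}
    (h : marginal p s = marginal p t) : s.card = t.card := by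
  simpa only [marginal_apply, Multiset.card_map] using congrArg Multiset.card h

theorem jointMarginal_empty_eq_of_card_eq {s t : Multiset (P →o Q)} (h : s.card = t.card) :
    jointMarginal ∅ s = jointMarginal ∅ t := by
  have hconst (r : Multiset (P →o Q)) :
      jointMarginal ∅ r = Multiset.replicate r.card (isEmptyElim : (∅ : Set P) → Q) := by
    exact Multiset.eq_replicate.2 ⟨Multiset.card_map _ _, fun _ _ => Subsingleton.elim _ _⟩
  rw [hconst, hconst, h]

theorem jointMarginal_univ_injective :
    Injective (jointMarginal (Set.univ : Set P) : Multiset (P →o Q) → _) :=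
  Multiset.map_injective fun _ _ h =>
    OrderHom.ext _ _ (funext fun x => congrFun h ⟨x, Set.mem_univ x⟩)

/-- The exchange of `a` for `b`: the monomials with these sets of variables form a squarefree
binomial of the ideal `J_{P,Q}`. -/
def SquarefreeMove (a b : Multiset (P →o Q)) : Prop :=
  a.Nodup ∧ b.Nodup ∧ ∀ p, marginal p a = marginal p b

variable (P Q) in
/-- The relation of being connected by squarefree moves, each of which replaces a submultiset. -/
def squarefreeCon : AddCon (Multiset (P →o Q)) :=
  addConGen SquarefreeMove

theorem SquarefreeMove.squarefreeCon {a b : Multiset (P →o Q)} (h : SquarefreeMove a b) :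
    squarefreeCon P Q a b :=
  AddConGen.Rel.of a b h

theorem marginal_eq_of_squarefreeCon {s t : Multiset (P →o Q)} (h : squarefreeCon P Q s t)
    (p : P) : marginal p s = marginal p t := by
  have hle : squarefreeCon P Q ≤ AddCon.ker (marginal p) :=
    AddCon.addConGen_le.2 fun _ _ hab => hab.2.2 p
  exact hle h

theorem squarefreeCon_of_isEmpty [IsEmpty P] (s t : Multiset (P →o Q)) :
    squarefreeCon P Q s t := by
  have hzero (s : Multiset (P →o Q)) : squarefreeCon P Q s 0 := by
    induction s using Multiset.induction_on with
    | empty => exact AddCon.refl _ 0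
    | cons φ s ih =>
      have hφ : SquarefreeMove {φ} 0 :=
        ⟨Multiset.nodup_singleton φ, Multiset.nodup_zero, isEmptyElim⟩
      simpa only [Multiset.singleton_add, add_zero] using AddCon.add _ hφ.squarefreeCon ih
  exact AddCon.trans _ (hzero s) (AddCon.symm _ (hzero t))

end Moves

section UpperSetExtension

variable {P Q : Type*} [Preorder P] [Preorder Q] {U : Set P} {p : P}

theorem squarefreeMove_splice {ι : Type*} [Fintype ι] (hP : IsCoforest P)
    (hpU : ∀ y ∈ U, ¬y ≤ p) (σ : Equiv.Perm ι) {h : ι → P →o Q}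
    (hh : ∀ i y, p < y → h i p ≤ h (σ i) y) (hinj : Injective fun i (y : U) => h i y) :
    SquarefreeMove (Finset.univ.val.map h)
      (Finset.univ.val.map fun i => splice hP (h (σ i)) (h i) p (hh i)) := by
  have hsplice_inj : Injective fun i => splice hP (h (σ i)) (h i) p (hh i) := fun i j hij =>
    σ.injective <| hinj <| funext fun y => by
      simpa only [splice_of_not_le (hpU y y.2)] using DFunLike.congr_fun hij y.1
  have hh_inj : Injective h := fun i j hij =>
    hinj (by simp only [hij])
  refine ⟨Finset.univ.nodup.map hh_inj, Finset.univ.nodup.map hsplice_inj, fun x => ?_⟩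
  simp only [marginal_apply, Multiset.map_map, comp_def]
  by_cases hx : x ≤ p
  · simp only [splice_of_le hx]
  · simp only [splice_of_not_le hx]
    exact (map_univ_comp_perm σ fun i => h i x).symm

theorem exists_squarefreeMove (hP : IsCoforest P) (hpU : ∀ y ∈ U, ¬y ≤ p)
    (hUp : ∀ y, p < y → y ∈ U) {s t : Multiset (P →o Q)} (hs : s ≠ 0)
    (hst : jointMarginal U s = jointMarginal U t) (hp : marginal p s = marginal p t) :
    ∃ a b c, a ≠ 0 ∧ a ≤ s ∧ c ≤ t ∧ SquarefreeMove a b ∧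
      jointMarginal U a = jointMarginal U c ∧
      jointMarginal (insert p U) b = jointMarginal (insert p U) c := by
  obtain ⟨ι, _, _, σ, h, k, hinj, hhs, hkt, hkU, hkp⟩ :=
    exists_cycle (fun (φ : P →o Q) (y : U) => φ y) (fun φ => φ p) hs hst hp
  have hkU' : ∀ i, ∀ y ∈ U, k i y = h (σ i) y := fun i y hy => congrFun (hkU i) ⟨y, hy⟩
  have hh : ∀ i y, p < y → h i p ≤ h (σ i) y := fun i y hy => by
    rw [← hkp i, ← hkU' i y (hUp y hy)]
    exact (k i).monotone hy.le
  have hsplice : ∀ i, ∀ y ∈ insert p U, splice hP (h (σ i)) (h i) p (hh i) y = k i y := by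
    intro i y hy
    obtain hyp | hy := hy
    · rw [hyp, splice_of_le le_rfl, hkp]
    · exact (splice_of_not_le (hpU y hy)).trans (hkU' i y hy).symm
  refine ⟨_, _, _, ?_, hhs, hkt, squarefreeMove_splice hP hpU σ hh hinj, ?_, ?_⟩
  · simpa using Finset.univ_nonempty (α := ι).ne_empty
  · simp only [jointMarginal_apply, Multiset.map_map, comp_def, hkU]
    exact (map_univ_comp_perm σ fun i (y : U) => h i y).symm
  · simp only [jointMarginal_apply, Multiset.map_map]
    exact Multiset.map_congr rfl fun i _ => funext fun y => hsplice i y y.2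

theorem exists_squarefreeCon_jointMarginal_insert (hP : IsCoforest P)
    (hpU : ∀ y ∈ U, ¬y ≤ p) (hUp : ∀ y, p < y → y ∈ U) (s t : Multiset (P →o Q))
    (hst : jointMarginal U s = jointMarginal U t) (hp : marginal p s = marginal p t) :
    ∃ s', squarefreeCon P Q s s' ∧
      jointMarginal (insert p U) s' = jointMarginal (insert p U) t := by
  induction s using Multiset.strongInductionOn generalizing t with
  | ih s ih =>
    obtain rfl | hs := eq_or_ne s 0
    · have ht : t = 0 := by simpa [jointMarginal] using hst.symm
      exact ⟨0, AddCon.refl _ 0, by rw [ht]⟩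
    obtain ⟨a, b, c, ha, has, hct, hab, hac, hbc⟩ :=
      exists_squarefreeMove hP hpU hUp hs hst hp
    obtain ⟨r, rfl⟩ := Multiset.le_iff_exists_add.1 has
    obtain ⟨w, rfl⟩ := Multiset.le_iff_exists_add.1 hct
    have hrw : jointMarginal U r = jointMarginal U w := by
      rw [map_add, map_add, hac] at hst
      exact add_left_cancel hst
    have hpac : marginal p a = marginal p c :=
      (hab.2.2 p).trans (marginal_eq_of_jointMarginal_eq (Set.mem_insert p U) hbc)
    have hprw : marginal p r = marginal p w := by
      rw [map_add, map_add, hpac] at hp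
      exact add_left_cancel hp
    have hlt : r < a + r := lt_add_of_pos_left r (pos_iff_ne_zero.2 ha)
    obtain ⟨r', hrr', hr'w⟩ := ih r hlt w hrw hprw
    exact ⟨b + r', AddCon.add _ hab.squarefreeCon hrr', by rw [map_add, map_add, hbc, hr'w]⟩

end UpperSetExtension

section Connectivity

variable {P Q : Type*} [PartialOrder P] [Preorder Q]

theorem squarefreeCon_of_jointMarginal_compl_eq (hP : IsCoforest P) (D : Finset P)
    (hD : IsLowerSet (D : Set P)) {s t : Multiset (P →o Q)}
    (hst : jointMarginal (D : Set P)ᶜ s = jointMarginal (D : Set P)ᶜ t)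
    (hm : ∀ p, marginal p s = marginal p t) : squarefreeCon P Q s t := by
  classical
  induction D using Finset.strongInduction generalizing s with
  | H D ih =>
    obtain rfl | hne := D.eq_empty_or_nonempty
    · rw [Finset.coe_empty, Set.compl_empty] at hst
      rw [jointMarginal_univ_injective hst]
      exact AddCon.refl _ t
    obtain ⟨p, hpD, hpmax⟩ := D.exists_maximal hne
    obtain ⟨s', hss', hs't⟩ := exists_squarefreeCon_jointMarginal_insert hP
      (fun y (hy : y ∉ (D : Set P)) hyp => hy (hD hyp hpD))
      (fun y hpy hy => hpy.not_ge (hpmax hy hpy.le)) s t hst (hm p)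
    have herase : ((D.erase p : Finset P) : Set P)ᶜ = insert p (D : Set P)ᶜ := by
      ext x
      simp only [Finset.coe_erase, Set.mem_compl_iff, Set.mem_sdiff, Set.mem_singleton_iff,
        Set.mem_insert_iff]
      tauto
    have hlower : IsLowerSet ((D.erase p : Finset P) : Set P) := by
      rw [Finset.coe_erase]
      exact hD.erase fun y hy hpy => le_antisymm (hpmax hy hpy) hpy
    refine AddCon.trans _ hss' (ih _ (Finset.erase_ssubset hpD) hlower (herase ▸ hs't) fun x => ?_)
    exact (marginal_eq_of_squarefreeCon hss' x).symm.trans (hm x)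

theorem squarefreeCon_iff_marginal_eq [Finite P] (hP : IsCoforest P) {s t : Multiset (P →o Q)} :
    squarefreeCon P Q s t ↔ ∀ p, marginal p s = marginal p t := by
  refine ⟨marginal_eq_of_squarefreeCon, fun h => ?_⟩
  cases isEmpty_or_nonempty P with
  | inl _ => exact squarefreeCon_of_isEmpty s t
  | inr hne =>
    have := Fintype.ofFinite P
    refine squarefreeCon_of_jointMarginal_compl_eq hP Finset.univ ?_ ?_ h
    · rw [Finset.coe_univ]
      exact isLowerSet_univ
    · rw [Finset.coe_univ, Set.compl_univ]
      exact jointMarginal_empty_eq_of_card_eq (card_eq_of_marginal_eq (h hne.some))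

end Connectivity

section Binomials

variable {σ τ R : Type*} [CommRing R]

/-- The congruence on exponents that identifies `u` and `v` when `I` contains the binomial with
exponents `u` and `v`. -/
def binomialCon (I : Ideal (MvPolynomial σ R)) : AddCon (σ →₀ ℕ) where
  r u v := monomial u 1 - monomial v 1 ∈ I
  iseqv :=
    { refl u := by simp
      symm h := by simpa using neg_mem h
      trans h₁ h₂ := by simpa using add_mem h₁ h₂ }
  add' {u u' v v'} h₁ h₂ := by
    have hsplit : (monomial (u + v) 1 - monomial (u' + v') 1 : MvPolynomial σ R) =
        monomial v 1 * (monomial u 1 - monomial u' 1) +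
          monomial u' 1 * (monomial v 1 - monomial v' 1) := by
      rw [← one_mul (1 : R), ← monomial_mul, ← monomial_mul, one_mul]
      ring
    rw [hsplit]
    exact add_mem (I.mul_mem_left _ h₁) (I.mul_mem_left _ h₂)

theorem ker_le_of_binomial_mem (Φ : MvPolynomial σ R →ₗ[R] MvPolynomial τ R)
    (hΦ : ∀ u, ∃ w, Φ (monomial u 1) = monomial w 1) (N : Submodule R (MvPolynomial σ R))
    (hN : ∀ u v, Φ (monomial u 1) = Φ (monomial v 1) → monomial u 1 - monomial v 1 ∈ N) :
    LinearMap.ker Φ ≤ N := by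
  choose E hE using hΦ
  let L : MvPolynomial τ R →ₗ[R] MvPolynomial σ R :=
    (basisMonomials τ R).constr R fun w => monomial (invFun E w) 1
  have hL (w : τ →₀ ℕ) : L (monomial w 1) = monomial (invFun E w) 1 := by
    rw [← (basisMonomials τ R).constr_basis R (fun w => monomial (invFun E w) (1 : R)) w,
      coe_basisMonomials]
  have hsub (f : MvPolynomial σ R) : f - L (Φ f) ∈ N := by
    induction f using MvPolynomial.induction_on' with
    | monomial u c =>
      have hu : monomial u 1 - monomial (invFun E (E u)) 1 ∈ N :=
        hN _ _ (by rw [hE, hE, invFun_eq (f := E) ⟨u, rfl⟩])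
      have hc : (monomial u c : MvPolynomial σ R) = c • monomial u 1 := by
        rw [smul_monomial, smul_eq_mul, mul_one]
      rw [hc, map_smul, map_smul, hE, hL, ← smul_sub]
      exact N.smul_mem c hu
    | add f g hf hg =>
      rw [map_add, map_add, add_sub_add_comm]
      exact add_mem hf hg
  intro f hf
  simpa [LinearMap.mem_ker.1 hf] using hsub f

end Binomials

section ImageExponent

variable {P Q : Type*} [Preorder P] [Preorder Q]

open Classical in
/-- The exponent of the image under `Φ` of the monomial whose variables are the elements of `s`:
the exponent of `x_{p,q}` is the number of `φ ∈ s` with `φ p = q`. -/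
noncomputable def imageExponent [Finite P] [Finite Q] (s : Multiset (P →o Q)) : P × Q →₀ ℕ :=
  Finsupp.equivFunOnFinite.symm fun x => (marginal x.1 s).count x.2

theorem imageExponent_eq_iff [Finite P] [Finite Q] {s t : Multiset (P →o Q)} :
    imageExponent s = imageExponent t ↔ ∀ p, marginal p s = marginal p t := by
  classical
  simp only [imageExponent, Equiv.apply_eq_iff_eq, funext_iff, Prod.forall, Multiset.ext]

theorem imageExponent_cons [Fintype P] [Finite Q] (φ : P →o Q) (s : Multiset (P →o Q)) :
    imageExponent (φ ::ₘ s) = ∑ p, Finsupp.single (p, φ p) 1 + imageExponent s := by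
  classical
  ext ⟨p, q⟩
  simp [imageExponent, marginal_apply, Multiset.count_cons,
    Finsupp.single_apply, ite_and, add_comm, eq_comm]

end ImageExponent

section IsotonianIdeal

variable {K P Q : Type} [Field K] [PartialOrder P] [Fintype P] [PartialOrder Q] [Fintype Q]

theorem isotonianMap_monomial [DecidableEq (P →o Q)] (s : Multiset (P →o Q)) :
    isotonianMap K P Q (monomial (Multiset.toFinsupp s) 1) = monomial (imageExponent s) 1 := by
  induction s using Multiset.induction_on with
  | empty =>
    have hzero : imageExponent (0 : Multiset (P →o Q)) = 0 := by
      ext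
      simp [imageExponent]
    rw [hzero, map_zero, monomial_zero', monomial_zero', map_one, map_one, map_one]
  | cons φ s ih =>
    have hφ : monomial (Multiset.toFinsupp (φ ::ₘ s)) (1 : K) =
        X φ * monomial (Multiset.toFinsupp s) 1 := by
      rw [X, monomial_mul, one_mul, ← Multiset.singleton_add, map_add,
        Multiset.toFinsupp_singleton]
    have hX : isotonianMap K P Q (X φ) = monomial (∑ p, Finsupp.single (p, φ p) 1) 1 := by
      rw [isotonianMap, aeval_X, monomial_sum_one]
      rfl
    rw [hφ, map_mul, hX, ih, monomial_mul, one_mul, imageExponent_cons]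

theorem binomial_mem_isotonianIdeal_iff [DecidableEq (P →o Q)] {s t : Multiset (P →o Q)} :
    monomial (Multiset.toFinsupp s) 1 - monomial (Multiset.toFinsupp t) 1 ∈ isotonianIdeal K P Q ↔
      ∀ p, marginal p s = marginal p t := by
  rw [isotonianIdeal, RingHom.sub_mem_ker_iff, isotonianMap_monomial, isotonianMap_monomial,
    ← imageExponent_eq_iff]
  exact (monomial_left_injective one_ne_zero).eq_iff

theorem squarefreeCon_le_comap_binomialCon [DecidableEq (P →o Q)] :
    squarefreeCon P Q ≤ (binomialCon (Ideal.span
      {f | f ∈ isotonianIdeal K P Q ∧ IsSquarefreeBinomial f})).comap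
        Multiset.toFinsupp (map_add Multiset.toFinsupp) := by
  refine AddCon.addConGen_le.2 fun a b hab => Ideal.subset_span
    ⟨binomial_mem_isotonianIdeal_iff.2 hab.2.2, _, _, fun φ => ?_, fun φ => ?_, rfl⟩
  · exact Multiset.nodup_iff_count_le_one.1 hab.1 φ
  · exact Multiset.nodup_iff_count_le_one.1 hab.2.1 φ

end IsotonianIdeal

end Isotonian

open Isotonian in
theorem statement7_general (K P Q : Type) [Field K] [PartialOrder P] [Fintype P]
    [PartialOrder Q] [Fintype Q]
    (hcoroot : ∀ a b c : P, c ≤ a → c ≤ b → a ≤ b ∨ b ≤ a) :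
    isotonianIdeal K P Q =
      Ideal.span {f | f ∈ isotonianIdeal K P Q ∧ IsSquarefreeBinomial f} := by
  classical
  refine le_antisymm ?_ (Ideal.span_le.2 fun _ hf => hf.1)
  refine ker_le_of_binomial_mem (isotonianMap K P Q).toLinearMap
    (Multiset.toFinsupp.surjective.forall.2 fun s => ⟨_, isotonianMap_monomial s⟩)
    (Submodule.restrictScalars K (Ideal.span _)) ?_
  refine Multiset.toFinsupp.surjective.forall₂.2 fun s t hst => ?_
  have hmarginal : ∀ p, marginal p s = marginal p t :=
    binomial_mem_isotonianIdeal_iff.1 ((RingHom.sub_mem_ker_iff _).2 hst)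
  exact squarefreeCon_le_comap_binomialCon ((squarefreeCon_iff_marginal_eq hcoroot).2 hmarginal)

/-- If `P` is co-rooted, then `J_{P,Q}` is generated by the squarefree binomials it contains. -/
theorem statement7 (K P Q : Type) [Field K] [PartialOrder P] [Fintype P]
    [PartialOrder Q] [Fintype Q]
    (hmax : ∃ p₀ : P, ∀ x : P, x ≤ p₀)
    (hcoroot : ∀ a b c : P, c ≤ a → c ≤ b → a ≤ b ∨ b ≤ a) :
    isotonianIdeal K P Q =
      Ideal.span {f | f ∈ isotonianIdeal K P Q ∧ IsSquarefreeBinomial f} :=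
  statement7_general K P Q hcoroot
end

section
/- Let Q be a finite poset, K a field, and let P be a finite poset that is order-isomorphic to a disjoint sum P₁ + P₂ + ⋯ + P_r of finite posets each of which is rooted or co-rooted. Then the ideal J_{P,Q} is generated by squarefree binomials. -/
open MvPolynomial

/-- A finite poset is rooted if it has a least element and any two elements with a
common upper bound are comparable. -/
def IsRooted (P : Type) [PartialOrder P] : Prop :=
  (∃ p₀ : P, ∀ x : P, p₀ ≤ x) ∧ ∀ a b c : P, a ≤ c → b ≤ c → a ≤ b ∨ b ≤ a

/-- A finite poset is co-rooted if its order dual is rooted. -/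
def IsCorooted (P : Type) [PartialOrder P] : Prop :=
  (∃ p₀ : P, ∀ x : P, x ≤ p₀) ∧ ∀ a b c : P, c ≤ a → c ≤ b → a ≤ b ∨ b ≤ a

/-!
Only one property of `P` matters: its Hasse diagram is a forest.

Modulo the squarefree binomials, two multisets of functions on `U ⊔ V` with the same restrictions
to `U` and to `V` are congruent: the two matchings between them, along `U` and along `V`, differ by
a permutation `σ`, and an invariant set of `σ` splits the multisets into smaller ones. If `σ` is a
single cycle and two restrictions to `U` coincide, composing `σ` with their transposition changes
its sign, so it is no longer a single cycle; if the restrictions to `U` are distinct, both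
multisets are already squarefree.

Given two multisets of isotone maps with the same values, grow a set `D`, connected in the forest,
on which they agree as multisets of functions. For a vertex `c` next to `D`, the branch `U` of the
forest at `c` can be permuted among the members of one multiset against its complement so that
restrictions to `D` and values at `c` match the other multiset. The maps remain isotone, since
comparabilities between the branch and its complement pass through `c` and its neighbour in `D`,
where they agree with a map of the other multiset.
-/

section Permutations

open Equiv

variable {ι : Type*}

theorem sign_eq_of_forall_sameCycle [Fintype ι] [DecidableEq ι] [Nontrivial ι] {σ : Perm ι}
    (h : ∀ x y, σ.SameCycle x y) : σ.sign = -(-1) ^ Fintype.card ι := by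
  have hcycleOn : σ.IsCycleOn Set.univ := ⟨Set.bijOn_univ.2 σ.bijective, fun x _ y _ => h x y⟩
  have hmoves (x : ι) : σ x ≠ x := hcycleOn.apply_ne Set.nontrivial_univ (Set.mem_univ x)
  obtain ⟨x⟩ : Nonempty ι := inferInstance
  have hcycle : σ.IsCycle := ⟨x, hmoves x, fun y _ => h x y⟩
  have hsupport : σ.support = Finset.univ := by simpa [Finset.eq_univ_iff_forall] using hmoves
  rw [hcycle.sign, hsupport, Finset.card_univ]

theorem exists_not_sameCycle_or_exists_not_sameCycle_mul_swap [Finite ι] [DecidableEq ι]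
    (σ : Perm ι) {i j : ι} (hij : i ≠ j) :
    (∃ x y, ¬σ.SameCycle x y) ∨ ∃ x y, ¬(σ * swap i j).SameCycle x y := by
  by_contra! h
  have := Fintype.ofFinite ι
  have : Nontrivial ι := ⟨i, j, hij⟩
  have hsign := sign_eq_of_forall_sameCycle h.2
  rw [Perm.sign_mul, Perm.sign_swap hij, ← sign_eq_of_forall_sameCycle h.1, mul_neg_one] at hsign
  exact units_ne_neg_self σ.sign hsign.symm

end Permutations

section Multisets

open Equiv Finset

variable {X A B ι κ : Type*}

theorem exists_fin_map_univ_val_eq (s : Multiset X) :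
    ∃ (n : ℕ) (φ : Fin n → X), univ.val.map φ = s := by
  induction s using Quotient.inductionOn with
  | h l => exact ⟨l.length, l.get, by rw [Fin.univ_val_map, List.ofFn_get]; rfl⟩

theorem exists_equiv_of_map_univ_val_eq [Fintype ι] [Fintype κ] {f : ι → A} {g : κ → A}
    (h : univ.val.map f = univ.val.map g) : ∃ e : ι ≃ κ, ∀ i, g (e i) = f i := by
  classical
  have hcard (a : A) : Fintype.card {i // f i = a} = Fintype.card {j // g j = a} := by
    have hcount := congrArg (Multiset.count a) h
    simp only [Multiset.count_map, ← Finset.filter_val, Finset.card_val] at hcount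
    simpa only [Fintype.card_subtype, eq_comm] using hcount
  exact ⟨Equiv.ofFiberEquiv fun a => Fintype.equivOfCardEq (hcard a),
    fun i => Equiv.ofFiberEquiv_map _ i⟩

theorem exists_map_univ_val_eq_of_map_eq [Fintype ι] {f : ι → A} {g : X → A} {t : Multiset X}
    (h : univ.val.map f = t.map g) : ∃ ψ : ι → X, univ.val.map ψ = t ∧ ∀ i, g (ψ i) = f i := by
  obtain ⟨n, ψ, rfl⟩ := exists_fin_map_univ_val_eq t
  rw [Multiset.map_map] at h
  obtain ⟨e, he⟩ := exists_equiv_of_map_univ_val_eq h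
  exact ⟨ψ ∘ e, by rw [← Multiset.map_map, Multiset.map_univ_val_equiv], he⟩

theorem exists_le_map_eq_of_not_sameCycle [Fintype ι] {a : X → A} {b : X → B} {φ ψ : ι → X}
    {σ : Perm ι} (ha : ∀ i, a (ψ i) = a (φ i)) (hb : ∀ i, b (ψ i) = b (φ (σ i))) {x y : ι}
    (hxy : ¬σ.SameCycle x y) :
    ∃ s ≤ univ.val.map φ, ∃ t ≤ univ.val.map ψ, 0 < s.card ∧ s.card < Fintype.card ι ∧
      s.map a = t.map a ∧ s.map b = t.map b := by
  classical
  let S : Finset ι := {z | σ.SameCycle x z}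
  have hσS : S.val.map σ = S.val := by
    have : S.map σ.toEmbedding = S := by ext z; simp [S]
    exact congrArg Finset.val this
  refine ⟨S.val.map φ, Multiset.map_le_map (val_le_iff.2 S.subset_univ), S.val.map ψ,
    Multiset.map_le_map (val_le_iff.2 S.subset_univ), ?_, ?_, ?_, ?_⟩
  · rw [Multiset.card_map, card_val, card_pos]
    exact ⟨x, by simp [S, Perm.SameCycle.refl]⟩
  · rw [Multiset.card_map, card_val]
    exact card_lt_univ_of_notMem (x := y) (by simpa [S] using hxy)
  · simp [Multiset.map_map, ha]
  · calc (S.val.map φ).map b = (S.val.map σ).map fun i => b (φ i) := by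
          rw [hσS, Multiset.map_map]; rfl
      _ = (S.val.map ψ).map b := by simp [Multiset.map_map, hb]

theorem exists_le_map_eq_of_not_nodup_map {a : X → A} {b : X → B} {s t : Multiset X}
    (ha : s.map a = t.map a) (hb : s.map b = t.map b) (hs : ¬(s.map a).Nodup) :
    ∃ s' ≤ s, ∃ t' ≤ t, 0 < s'.card ∧ s'.card < s.card ∧
      s'.map a = t'.map a ∧ s'.map b = t'.map b := by
  obtain ⟨n, φ, rfl⟩ := exists_fin_map_univ_val_eq s
  rw [Multiset.map_map] at ha hs
  obtain ⟨ψ, rfl, hψ⟩ := exists_map_univ_val_eq_of_map_eq ha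
  obtain ⟨i, j, hij, hne⟩ : ∃ i j, a (φ i) = a (φ j) ∧ i ≠ j := by
    by_contra! hinj
    exact hs (univ.nodup.map hinj)
  rw [Multiset.map_map, Multiset.map_map] at hb
  obtain ⟨σ, hσ⟩ := exists_equiv_of_map_univ_val_eq hb.symm
  replace hσ (k) : b (ψ k) = b (φ (σ k)) := (hσ k).symm
  rw [Multiset.card_map, card_val]
  obtain ⟨x, y, hxy⟩ | ⟨x, y, hxy⟩ := exists_not_sameCycle_or_exists_not_sameCycle_mul_swap σ hne
  · exact exists_le_map_eq_of_not_sameCycle hψ hσ hxy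
  · have hψswap : univ.val.map (ψ ∘ swap i j) = univ.val.map ψ := by
      rw [← Multiset.map_map, Multiset.map_univ_val_equiv]
    rw [← hψswap]
    have hψa (k) : a (ψ (swap i j k)) = a (φ k) :=
      (hψ _).trans (apply_swap_eq_self (v := a ∘ φ) hij k)
    exact exists_le_map_eq_of_not_sameCycle hψa (σ := σ * swap i j) (fun k => hσ _) hxy

theorem addCon_of_map_eq_of_map_eq (c : AddCon (Multiset X)) (a : X → A) (b : X → B)
    (hc : ∀ s t : Multiset X, s.Nodup → t.Nodup → s.map a = t.map a → s.map b = t.map b → c s t)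
    {s t : Multiset X} (ha : s.map a = t.map a) (hb : s.map b = t.map b) : c s t := by
  induction hn : s.card using Nat.strong_induction_on generalizing s t with
  | h n ih =>
    by_cases hs : (s.map a).Nodup
    · exact hc s t (.of_map a hs) (.of_map a (ha ▸ hs)) ha hb
    obtain ⟨s₁, hs₁, t₁, ht₁, hpos, hlt, ha₁, hb₁⟩ := exists_le_map_eq_of_not_nodup_map ha hb hs
    obtain ⟨s₂, rfl⟩ := Multiset.le_iff_exists_add.1 hs₁
    obtain ⟨t₂, rfl⟩ := Multiset.le_iff_exists_add.1 ht₁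
    rw [Multiset.map_add, Multiset.map_add, ha₁] at ha
    rw [Multiset.map_add, Multiset.map_add, hb₁] at hb
    rw [Multiset.card_add] at hn hlt
    exact c.add (ih _ (by lia) ha₁ hb₁ rfl)
      (ih _ (by lia) (add_left_cancel ha) (add_left_cancel hb) rfl)

end Multisets

section Branches

variable {V : Type*} {G : SimpleGraph V} {D U : Set V} {c d : V}

/-- The set `D` is connected inside each connected component of `G`. In a forest this says that no
vertex outside `D` separates two vertices of `D`. -/
def IsComponentwiseConnected (G : SimpleGraph V) (D : Set V) : Prop :=
  ∀ x y : D, G.Reachable x y → (G.induce D).Reachable x y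

/-- The set `U`, disjoint from `D`, is a branch growing out of `D` at its vertex `c`: every edge
leaving `U` goes from `c` to a vertex of `D`. There may be no such edge. -/
structure IsBranch (G : SimpleGraph V) (D U : Set V) (c : V) : Prop where
  mem : c ∈ U
  disjoint : Disjoint D U
  entry : ∀ ⦃p q⦄, p ∉ U → q ∈ U → G.Adj p q → p ∈ D ∧ q = c

protected theorem IsComponentwiseConnected.insert (hD : IsComponentwiseConnected G D)
    (hc : ∀ y ∈ D, G.Reachable c y → ∃ d ∈ D, G.Adj c d) :
    IsComponentwiseConnected G (insert c D) := by
  have hmono (x y : D) (h : G.Reachable x y) :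
      (G.induce (insert c D)).Reachable ⟨x, .inr x.2⟩ ⟨y, .inr y.2⟩ :=
    (hD x y h).map (G.induceHomOfLE (Set.subset_insert c D)).toHom
  have hroot (y : D) (h : G.Reachable c y) :
      (G.induce (insert c D)).Reachable ⟨c, .inl rfl⟩ ⟨y, .inr y.2⟩ := by
    obtain ⟨d, hd, hcd⟩ := hc y y.2 h
    have hadj : (G.induce (insert c D)).Adj ⟨c, .inl rfl⟩ ⟨d, .inr hd⟩ := hcd
    exact hadj.reachable.trans (hmono ⟨d, hd⟩ y (hcd.symm.reachable.trans h))
  rintro ⟨x, rfl | hx⟩ ⟨y, rfl | hy⟩ hxy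
  · exact .rfl
  · exact hroot ⟨y, hy⟩ hxy
  · exact (hroot ⟨x, hx⟩ hxy.symm).symm
  · exact hmono ⟨x, hx⟩ ⟨y, hy⟩ hxy

theorem IsComponentwiseConnected.isBranch_of_adj (hD : IsComponentwiseConnected G D)
    (hG : G.IsAcyclic) (hd : d ∈ D) (hc : c ∉ D) (hdc : G.Adj d c) :
    IsBranch G D {y | (G.deleteEdges {s(d, c)}).Reachable c y} c where
  mem := .rfl
  disjoint := by
    have hbridge : ¬(G.deleteEdges {s(d, c)}).Reachable d c :=
      SimpleGraph.isBridge_iff.1 (SimpleGraph.isAcyclic_iff_forall_adj_isBridge.1 hG hdc)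
    rw [Set.disjoint_left]
    intro y hyD hyU
    let toDeleted : G.induce D →g G.deleteEdges {s(d, c)} :=
      ⟨Subtype.val, fun {a b} hab => SimpleGraph.deleteEdges_adj.2 ⟨hab, fun h => hc <| by
        have hmem : c ∈ s((a : V), b) := Set.mem_singleton_iff.1 h ▸ Sym2.mem_mk_right d c
        obtain rfl | rfl := Sym2.mem_iff.1 hmem
        exacts [a.2, b.2]⟩⟩
    have hreach : (G.induce D).Reachable ⟨d, hd⟩ ⟨y, hyD⟩ :=
      hD _ _ (hdc.reachable.trans (hyU.mono (G.deleteEdges_le _)))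
    exact hbridge ((hreach.map toDeleted).trans hyU.symm)
  entry p q hp hq hpq := by
    by_cases he : s(p, q) = s(d, c)
    · obtain ⟨rfl, rfl⟩ | ⟨rfl, rfl⟩ := Sym2.eq_iff.1 he
      · exact ⟨hd, rfl⟩
      · exact absurd .rfl hp
    · have hadj : (G.deleteEdges {s(d, c)}).Adj q p := by
        simpa [SimpleGraph.deleteEdges_adj, hpq.symm, Sym2.eq_swap] using he
      exact absurd (hq.trans hadj.reachable) hp

theorem IsComponentwiseConnected.exists_isBranch (hD : IsComponentwiseConnected G D)
    (hG : G.IsAcyclic) (hne : D ≠ Set.univ) :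
    ∃ c U, IsBranch G D U c ∧ IsComponentwiseConnected G (insert c D) := by
  by_cases hadj : ∃ d ∈ D, ∃ c ∉ D, G.Adj d c
  · obtain ⟨d, hd, c, hc, hdc⟩ := hadj
    exact ⟨c, _, hD.isBranch_of_adj hG hd hc hdc, hD.insert fun _ _ _ => ⟨d, hd, hdc.symm⟩⟩
  · push Not at hadj
    obtain ⟨c, hc⟩ := (Set.ne_univ_iff_exists_notMem D).1 hne
    have hfar (y : V) (hy : y ∈ D) : ¬G.Reachable c y := by
      rintro ⟨w⟩
      obtain ⟨e, -, he₁, he₂⟩ := w.reverse.exists_boundary_dart D hy hc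
      exact hadj _ he₁ _ he₂ e.adj
    have hbranch : IsBranch G D {y | G.Reachable c y} c :=
      { mem := .rfl
        disjoint := Set.disjoint_left.2 hfar
        entry := fun p q hp hq hpq => absurd (hq.trans hpq.symm.reachable) hp }
    exact ⟨c, _, hbranch, hD.insert fun y hy h => absurd h (hfar y hy)⟩

end Branches

section IsotoneMaps

open Finset

variable {P Q : Type*} [PartialOrder P] [Preorder Q] {D U : Set P} {c : P}

theorem exists_covBy_notMem_mem [Finite P] {x y : P} (hxy : x ≤ y) (hx : x ∉ U) (hy : y ∈ U) :
    ∃ p q, x ≤ p ∧ p ⋖ q ∧ q ≤ y ∧ p ∉ U ∧ q ∈ U := by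
  obtain ⟨p, hxp, hp⟩ := (Set.toFinite (Set.Icc x y \ U)).exists_le_maximal ⟨⟨le_rfl, hxy⟩, hx⟩
  obtain ⟨⟨-, hpy⟩, hpU⟩ := hp.prop
  have hlt : p < y := hpy.lt_of_ne fun h => hpU (h ▸ hy)
  obtain ⟨q, hpq, hqy⟩ := exists_covBy_le_of_lt hlt
  refine ⟨p, q, hxp, hpq, hqy, hpU, by_contra fun hq => hpq.lt.not_ge ?_⟩
  exact hp.le_of_ge ⟨⟨hxp.trans hpq.le, hqy⟩, hq⟩ hpq.le

theorem IsBranch.exists_mem_Icc_left [Finite P] (hU : IsBranch (SimpleGraph.hasse P) D U c)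
    {x y : P} (hxy : x ≤ y) (hx : x ∉ U) (hy : y ∈ U) : c ≤ y ∧ ∃ d ∈ D, d ∈ Set.Icc x c := by
  obtain ⟨p, q, hxp, hpq, hqy, hp, hq⟩ := exists_covBy_notMem_mem hxy hx hy
  obtain ⟨hpD, rfl⟩ := hU.entry hp hq (.inl hpq)
  exact ⟨hqy, p, hpD, hxp, hpq.le⟩

theorem IsBranch.exists_mem_Icc_right [Finite P] (hU : IsBranch (SimpleGraph.hasse P) D U c)
    {x y : P} (hxy : x ≤ y) (hx : x ∈ U) (hy : y ∉ U) : x ≤ c ∧ ∃ d ∈ D, d ∈ Set.Icc c y := by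
  obtain ⟨p, q, hxp, hpq, hqy, hp, hq⟩ :=
    exists_covBy_notMem_mem (U := Uᶜ) hxy (Set.notMem_compl_iff.2 hx) hy
  obtain ⟨hqD, rfl⟩ := hU.entry hq (Set.notMem_compl_iff.1 hp) (.inr hpq)
  exact ⟨hxp, q, hqD, hpq.le, hqy⟩

theorem IsBranch.exists_orderHom_glue [Finite P] (hU : IsBranch (SimpleGraph.hasse P) D U c)
    {φ χ ψ : P →o Q} (hφ : ∀ d ∈ D, φ d = ψ d) (hχ : χ c = ψ c) :
    ∃ θ : P →o Q, Set.EqOn θ χ U ∧ Set.EqOn θ φ Uᶜ := by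
  classical
  refine ⟨⟨U.piecewise χ φ, fun x y hxy => ?_⟩, U.piecewise_eqOn χ φ, U.piecewise_eqOn_compl χ φ⟩
  by_cases hx : x ∈ U <;> by_cases hy : y ∈ U <;>
    simp only [hx, hy, not_false_eq_true, Set.piecewise_eq_of_mem, Set.piecewise_eq_of_notMem]
  · exact χ.mono hxy
  · obtain ⟨hxc, d, hd, hcd, hdy⟩ := hU.exists_mem_Icc_right hxy hx hy
    calc χ x ≤ χ c := χ.mono hxc
      _ = ψ c := hχ
      _ ≤ ψ d := ψ.mono hcd
      _ = φ d := (hφ d hd).symm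
      _ ≤ φ y := φ.mono hdy
  · obtain ⟨hcy, d, hd, hxd, hdc⟩ := hU.exists_mem_Icc_left hxy hx hy
    calc φ x ≤ φ d := φ.mono hxd
      _ = ψ d := hφ d hd
      _ ≤ ψ c := ψ.mono hdc
      _ = χ c := hχ.symm
      _ ≤ χ y := χ.mono hcy
  · exact φ.mono hxy

/-- Two multisets of isotone maps have the same values if, at every point, they take the same
values with the same multiplicities. -/
def SameValues (s t : Multiset (P →o Q)) : Prop :=
  ∀ p, s.map (fun φ => φ p) = t.map fun φ => φ p

/-- Two multisets of isotone maps have the same restrictions to `D` if they restrict to the same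
multiset of functions on `D`. -/
def SameRestrictions (D : Set P) (s t : Multiset (P →o Q)) : Prop :=
  s.map (fun φ (p : D) => φ p) = t.map fun φ (p : D) => φ p

theorem SameRestrictions.map_apply_eq {s t : Multiset (P →o Q)} (h : SameRestrictions U s t)
    {p : P} (hp : p ∈ U) : s.map (fun φ => φ p) = t.map fun φ => φ p := by
  have hmap := congrArg (Multiset.map fun f : U → Q => f ⟨p, hp⟩) h
  rwa [Multiset.map_map, Multiset.map_map] at hmap

theorem SameRestrictions.sameValues {s t : Multiset (P →o Q)} (h : SameRestrictions U s t)
    (hcompl : SameRestrictions Uᶜ s t) : SameValues s t := fun p =>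
  (em (p ∈ U)).elim h.map_apply_eq hcompl.map_apply_eq

theorem sameRestrictions_map_univ_val {ι : Type*} [Fintype ι] {φ ψ : ι → P →o Q}
    (h : ∀ i, Set.EqOn (φ i) (ψ i) D) :
    SameRestrictions D (univ.val.map φ) (univ.val.map ψ) := by
  rw [SameRestrictions, Multiset.map_map, Multiset.map_map]
  exact Multiset.map_congr rfl fun i _ => funext fun p => h i p.2

theorem SameRestrictions.eq_of_univ {s t : Multiset (P →o Q)}
    (h : SameRestrictions Set.univ s t) : s = t :=
  Multiset.map_injective (fun _ _ hφψ => OrderHom.ext _ _ <| funext fun p =>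
    congrFun hφψ ⟨p, trivial⟩) h

theorem SameValues.sameRestrictions_empty [Nonempty P] {s t : Multiset (P →o Q)}
    (h : SameValues s t) : SameRestrictions ∅ s t := by
  obtain ⟨p⟩ := ‹Nonempty P›
  have hcard : s.card = t.card := by simpa using congrArg Multiset.card (h p)
  have hconst : (fun (φ : P →o Q) (p : (∅ : Set P)) => φ p) = fun _ => isEmptyElim :=
    Subsingleton.elim _ _
  rw [SameRestrictions, hconst, Multiset.map_const', Multiset.map_const', hcard]

theorem IsBranch.exists_exchange [Finite P] (hU : IsBranch (SimpleGraph.hasse P) D U c)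
    {s t : Multiset (P →o Q)} (hD : SameRestrictions D s t)
    (hc : s.map (fun φ => φ c) = t.map fun φ => φ c) :
    ∃ s', SameRestrictions U s s' ∧ SameRestrictions Uᶜ s s' ∧
      SameRestrictions (insert c D) s' t := by
  obtain ⟨n, ψ, rfl⟩ := exists_fin_map_univ_val_eq t
  rw [SameRestrictions, Multiset.map_map] at hD
  rw [Multiset.map_map] at hc
  obtain ⟨φ, hφs, hφ⟩ := exists_map_univ_val_eq_of_map_eq hD.symm
  obtain ⟨χ, hχs, hχ⟩ := exists_map_univ_val_eq_of_map_eq hc.symm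
  have hφD (i) : Set.EqOn (φ i) (ψ i) D := fun d hd => congrFun (hφ i) ⟨d, hd⟩
  choose θ hθU hθcompl using fun i => hU.exists_orderHom_glue (hφD i) (hχ i)
  have hθψ (i) : Set.EqOn (θ i) (ψ i) (insert c D) := by
    rintro x (rfl | hx)
    · exact (hθU i hU.mem).trans (hχ i)
    · exact (hθcompl i (hU.disjoint.notMem_of_mem_left hx)).trans (hφD i hx)
  exact ⟨univ.val.map θ, hχs ▸ sameRestrictions_map_univ_val fun i => (hθU i).symm,
    hφs ▸ sameRestrictions_map_univ_val fun i => (hθcompl i).symm,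
    sameRestrictions_map_univ_val hθψ⟩

theorem SameValues.rel_of_sameRestrictions [Finite P] (hP : (SimpleGraph.hasse P).IsAcyclic)
    (r : AddCon (Multiset (P →o Q)))
    (hr : ∀ s t : Multiset (P →o Q), s.Nodup → t.Nodup → SameValues s t → r s t)
    (hD : IsComponentwiseConnected (SimpleGraph.hasse P) D) {s t : Multiset (P →o Q)}
    (hst : SameValues s t) (hstD : SameRestrictions D s t) : r s t := by
  induction D using WellFoundedGT.induction generalizing s with
  | ind D ih =>
    obtain rfl | hne := eq_or_ne D Set.univ
    · exact hstD.eq_of_univ ▸ r.refl s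
    obtain ⟨c, U, hU, hinsert⟩ := hD.exists_isBranch hP hne
    have hlt : D < insert c D :=
      Set.ssubset_insert fun hc => hU.disjoint.notMem_of_mem_left hc hU.mem
    obtain ⟨s', hs'U, hs'compl, hs't⟩ := hU.exists_exchange hstD (hst c)
    have hss' : r s s' := addCon_of_map_eq_of_map_eq r _ _
      (fun s t hs ht hU hcompl => hr s t hs ht (SameRestrictions.sameValues hU hcompl))
      hs'U hs'compl
    have hs'_values : SameValues s' t := fun p =>
      (hs'U.sameValues hs'compl p).symm.trans (hst p)
    exact r.trans hss' (ih _ hlt hinsert hs'_values hs't)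

theorem SameValues.rel [Finite P] (hP : (SimpleGraph.hasse P).IsAcyclic)
    (r : AddCon (Multiset (P →o Q)))
    (hr : ∀ s t : Multiset (P →o Q), s.Nodup → t.Nodup → SameValues s t → r s t)
    {s t : Multiset (P →o Q)} (hst : SameValues s t) : r s t := by
  obtain hempty | hnonempty := isEmpty_or_nonempty P
  · have hzero (s : Multiset (P →o Q)) : r s 0 := by
      induction s using Multiset.induction_on with
      | empty => exact r.refl 0
      | cons φ s ih => simpa using r.add (hr {φ} 0 (by simp) (by simp) fun p => isEmptyElim p) ih
    exact r.trans (hzero s) (r.symm (hzero t))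
  · exact hst.rel_of_sameRestrictions hP r hr (D := ∅) (fun x => x.2.elim)
      hst.sameRestrictions_empty

end IsotoneMaps

section HasseDiagram

variable {P : Type*} [PartialOrder P]

theorem isBridge_hasse_of_covBy_of_le {c d : P} (hdc : d ⋖ c)
    (h : ∀ a b z, c ≤ z → a ≤ z → b ≤ z → a ≤ b ∨ b ≤ a) :
    (SimpleGraph.hasse P).IsBridge s(d, c) := by
  rw [SimpleGraph.isBridge_iff]
  rintro ⟨w⟩
  obtain ⟨⟨⟨p, q⟩, hpq⟩, -, hp, hq⟩ :=
    w.reverse.exists_boundary_dart (Set.Ici c) Set.self_mem_Ici hdc.lt.not_ge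
  obtain ⟨hpq | hqp, hne⟩ := SimpleGraph.deleteEdges_adj.1 hpq
  · exact hq (hp.trans hpq.le)
  · have hqc : q < c := ((h c q p hp hp hqp.le).resolve_left hq).lt_of_not_ge hq
    obtain rfl : c = p := by_contra fun hcp => hqp.2 hqc (lt_of_le_of_ne hp hcp)
    obtain rfl : d = q := (h d q c le_rfl hdc.le hqp.le).elim
      (fun hdq => by_contra fun hne => hdc.2 (lt_of_le_of_ne hdq hne) hqp.lt)
      (fun hqd => by_contra fun hne => hqp.2 (lt_of_le_of_ne hqd (Ne.symm hne)) hdc.lt)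
    exact hne (Sym2.eq_swap)

theorem isBridge_hasse_of_covBy_of_ge {c d : P} (hdc : d ⋖ c)
    (h : ∀ a b z, z ≤ d → z ≤ a → z ≤ b → a ≤ b ∨ b ≤ a) :
    (SimpleGraph.hasse P).IsBridge s(d, c) := by
  have hdual : (SimpleGraph.hasse Pᵒᵈ).IsBridge s(OrderDual.toDual c, OrderDual.toDual d) :=
    isBridge_hasse_of_covBy_of_le hdc.toDual fun a b z hz ha hb => h b a z hz hb ha
  rw [SimpleGraph.isBridge_iff] at hdual ⊢
  let toDual : (SimpleGraph.hasse P).deleteEdges {s(d, c)} →g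
      (SimpleGraph.hasse Pᵒᵈ).deleteEdges {s(OrderDual.toDual c, OrderDual.toDual d)} :=
    ⟨OrderDual.toDual, fun {a b} hab => by
      simpa [SimpleGraph.deleteEdges_adj, or_comm, and_comm] using hab⟩
  exact fun hreach => hdual (hreach.symm.map toDual)

theorem isAcyclic_hasse_sigma {ι : Type*} {P : ι → Type} [∀ i, PartialOrder (P i)]
    (hP : ∀ i, IsRooted (P i) ∨ IsCorooted (P i)) :
    (SimpleGraph.hasse (Σ i, P i)).IsAcyclic := by
  have hbridge (d c : Σ i, P i) (hdc : d ⋖ c) :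
      (SimpleGraph.hasse (Σ i, P i)).IsBridge s(d, c) := by
    obtain hroot | hcoroot := hP d.1
    · obtain ⟨i, d, c, -⟩ := hdc.le
      refine isBridge_hasse_of_covBy_of_le hdc ?_
      rintro _ _ _ ⟨_, _, z, _⟩ ⟨_, a, _, ha⟩ ⟨_, b, _, hb⟩
      exact (hroot.2 a b z ha hb).imp (.fiber i a b) (.fiber i b a)
    · refine isBridge_hasse_of_covBy_of_ge hdc ?_
      rintro _ _ _ ⟨i, z, _, _⟩ ⟨_, _, a, ha⟩ ⟨_, _, b, hb⟩
      exact (hcoroot.2 a b z ha hb).imp (.fiber i a b) (.fiber i b a)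
  refine SimpleGraph.isAcyclic_iff_forall_adj_isBridge.2 ?_
  rintro x y (h | h)
  · exact hbridge x y h
  · exact Sym2.eq_swap (a := y) ▸ hbridge y x h

theorem isAcyclic_hasse_of_orderIso {Q : Type*} [PartialOrder Q] (e : P ≃o Q)
    (h : (SimpleGraph.hasse Q).IsAcyclic) : (SimpleGraph.hasse P).IsAcyclic :=
  h.comap ⟨e, fun hab => hab.imp (apply_covBy_apply_iff e).2 (apply_covBy_apply_iff e).2⟩
    e.injective

end HasseDiagram

section Ideals

variable {σ τ R : Type*} [CommRing R]

theorem ker_le_of_forall_monomial_sub_monomial_mem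
    {f : MvPolynomial σ R →ₐ[R] MvPolynomial τ R} {g : (σ →₀ ℕ) → τ →₀ ℕ}
    (hf : ∀ u, f (monomial u 1) = monomial (g u) 1) {I : Ideal (MvPolynomial σ R)}
    (hI : ∀ u v, g u = g v → monomial u 1 - monomial v 1 ∈ I) : RingHom.ker f ≤ I := by
  let L : MvPolynomial τ R →ₗ[R] MvPolynomial σ R ⧸ I :=
    (basisMonomials τ R).constr R fun m => Ideal.Quotient.mk I (monomial (Function.invFun g m) 1)
  have hL (m : τ →₀ ℕ) :
      L (monomial m 1) = Ideal.Quotient.mk I (monomial (Function.invFun g m) 1) := by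
    rw [show monomial m (1 : R) = basisMonomials τ R m from rfl, Module.Basis.constr_basis]
  have hLf : L ∘ₗ f.toLinearMap = (Ideal.Quotient.mkₐ R I).toLinearMap := by
    refine (basisMonomials σ R).ext fun u => ?_
    simp only [coe_basisMonomials, LinearMap.comp_apply, AlgHom.toLinearMap_apply, hf, hL,
      Ideal.Quotient.mkₐ_eq_mk]
    exact Ideal.Quotient.eq.2 (hI _ _ (Function.invFun_eq ⟨u, rfl⟩))
  intro x hx
  have hLx : L (f x) = Ideal.Quotient.mk I x := LinearMap.congr_fun hLf x
  rw [(RingHom.mem_ker).1 hx, map_zero] at hLx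
  exact Ideal.Quotient.eq_zero_iff_mem.1 hLx.symm

theorem monomial_one_eq_prod_toMultiset (u : σ →₀ ℕ) :
    (monomial u 1 : MvPolynomial σ R) = (u.toMultiset.map X).prod := by
  rw [monomial_eq, C_1, one_mul, Finsupp.toMultiset_map, Finsupp.prod_toMultiset,
    Finsupp.prod_mapDomain_index (fun _ => pow_zero _) (fun _ => pow_add _)]

/-- Congruence modulo the ideal `I` of the monomials with given multisets of variables. -/
def monomialCon (I : Ideal (MvPolynomial σ R)) : AddCon (Multiset σ) where
  r s t := Ideal.Quotient.mk I (s.map X).prod = Ideal.Quotient.mk I (t.map X).prod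
  iseqv := eq_equivalence.comap _
  add' h₁ h₂ := by simp only [Multiset.map_add, Multiset.prod_add, map_mul, h₁, h₂]

theorem monomialCon_iff {I : Ideal (MvPolynomial σ R)} {u v : σ →₀ ℕ} :
    monomialCon I u.toMultiset v.toMultiset ↔ monomial u 1 - monomial v 1 ∈ I := by
  rw [monomial_one_eq_prod_toMultiset, monomial_one_eq_prod_toMultiset, ← Ideal.Quotient.eq]
  rfl

end Ideals

section IsotonianIdeal

variable (R P Q : Type*) [CommRing R] [Fintype P] [PartialOrder P] [Preorder Q]

/-- The homomorphism `Φ`, over any commutative ring and with values in any preorder. -/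
noncomputable def isotonianHom : MvPolynomial (P →o Q) R →ₐ[R] MvPolynomial (P × Q) R :=
  aeval fun φ : P →o Q => ∏ p : P, X (p, φ p)

variable {P Q}

/-- The exponent of the monomial to which `isotonianHom` maps the monomial with exponent `u`. -/
noncomputable def isotonianExponent (u : (P →o Q) →₀ ℕ) : P × Q →₀ ℕ :=
  ∑ p, u.mapDomain fun φ => (p, φ p)

theorem isotonianHom_monomial (u : (P →o Q) →₀ ℕ) :
    isotonianHom R P Q (monomial u 1) = monomial (isotonianExponent u) 1 := by
  rw [isotonianHom, aeval_monomial, map_one, one_mul, isotonianExponent, monomial_sum_one]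
  simp only [Finsupp.prod, ← Finset.prod_pow]
  rw [Finset.prod_comm]
  refine Finset.prod_congr rfl fun p _ => ?_
  rw [monomial_eq, C_1, one_mul,
    Finsupp.prod_mapDomain_index (fun _ => pow_zero _) (fun _ => pow_add _)]
  rfl

theorem isotonianExponent_apply (u : (P →o Q) →₀ ℕ) (p : P) (q : Q) :
    isotonianExponent u (p, q) = u.mapDomain (fun φ => φ p) q := by
  rw [isotonianExponent, Finsupp.finsetSum_apply,
    Finset.sum_eq_single_of_mem p (Finset.mem_univ p)]
  · rw [show (fun φ : P →o Q => (p, φ p)) = Prod.mk p ∘ fun φ => φ p from rfl,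
      Finsupp.mapDomain_comp, Finsupp.mapDomain_apply (Prod.mk_right_injective p)]
  · intro p' _ hne
    refine Finsupp.mapDomain_of_notMem_range _ _ ?_
    rintro ⟨φ, hφ⟩
    exact hne (congrArg Prod.fst hφ)

theorem sameValues_iff {u v : (P →o Q) →₀ ℕ} :
    SameValues u.toMultiset v.toMultiset ↔ isotonianExponent u = isotonianExponent v := by
  classical
  have hinj : Function.Injective (Finsupp.toMultiset : (Q →₀ ℕ) → Multiset Q) :=
    Finsupp.orderIsoMultiset.injective
  simp only [SameValues, Finsupp.toMultiset_map, hinj.eq_iff, Finsupp.ext_iff,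
    Prod.forall, isotonianExponent_apply]

theorem statement8_general (hP : (SimpleGraph.hasse P).IsAcyclic) :
    RingHom.ker (isotonianHom R P Q) = Ideal.span {f | f ∈ RingHom.ker (isotonianHom R P Q) ∧
      ∃ u v : (P →o Q) →₀ ℕ,
        (∀ φ, u φ ≤ 1) ∧ (∀ φ, v φ ≤ 1) ∧ f = monomial u 1 - monomial v 1} := by
  classical
  refine le_antisymm (ker_le_of_forall_monomial_sub_monomial_mem (isotonianHom_monomial R)
    fun u v huv => monomialCon_iff.1 ?_) (Ideal.span_le.2 fun f hf => hf.1)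
  refine (sameValues_iff.2 huv).rel hP _ fun s t hs ht hst => ?_
  obtain ⟨u, rfl⟩ : ∃ u, Finsupp.toMultiset u = s := ⟨_, s.toFinsupp_toMultiset⟩
  obtain ⟨v, rfl⟩ : ∃ v, Finsupp.toMultiset v = t := ⟨_, t.toFinsupp_toMultiset⟩
  refine monomialCon_iff.2 (Ideal.subset_span ⟨?_, u, v, ?_, ?_, rfl⟩)
  · rw [RingHom.mem_ker, map_sub, sub_eq_zero, isotonianHom_monomial,
      isotonianHom_monomial, sameValues_iff.1 hst]
  · simpa only [Multiset.nodup_iff_count_le_one, Finsupp.count_toMultiset] using hs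
  · simpa only [Multiset.nodup_iff_count_le_one, Finsupp.count_toMultiset] using ht

end IsotonianIdeal

/-- If `P` is order-isomorphic to the disjoint sum `P₁ + ⋯ + P_r` (the sigma type `Σ i, Pᵢ`
with its componentwise "disjoint sum" order) of posets each of which is rooted or
co-rooted, then `J_{P,Q}` is generated by the squarefree binomials it contains. -/
theorem statement8 (K P Q : Type) [Field K] [PartialOrder P] [Fintype P]
    [PartialOrder Q] [Fintype Q]
    (r : ℕ) (Pc : Fin r → Type) [∀ i, PartialOrder (Pc i)] [∀ i, Fintype (Pc i)]
    (hPc : ∀ i, IsRooted (Pc i) ∨ IsCorooted (Pc i))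
    (e : P ≃o (Σ i, Pc i)) :
    isotonianIdeal K P Q =
      Ideal.span {f | f ∈ isotonianIdeal K P Q ∧ IsSquarefreeBinomial f} :=
  statement8_general K (isAcyclic_hasse_of_orderIso e (isAcyclic_hasse_sigma hPc))
end
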